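/- arXiv:2206.05371 — 6 statements merged into one kernel-verified Lean document; each statement's English description precedes it below -/
import Mathlib

section
/- Let W : ℕ × ℕ → ℂ with W(1,1) = 1. Then the following two conditions are equivalent. (i) For all multiplicative functions F, G, H : ℕ → ℂ: the W-convolution F □_W G is again multiplicative; F □_W G = G □_W F on all positive integers; (F □_W G) □_W H = F □_W (G □_W H) on all positive integers; F □_W δ₁ = F on all positive integers; there exists a multiplicative I : ℕ → ℂ with F □_W I = δ₁ on all positive integers; and ((F □_W G)·H)(m) = ((F·H) □_W (G·H))(m) for all positive integers m, where · denotes pointwise product. (ii) For all positive integers a, b: W(a,b) = 1 if gcd(a,b) = 1 and W(a,b) = 0 otherwise. -/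
/-!
Both directions rest on evaluating `Wconv` on well-chosen multiplicative functions.

(i) ⇒ (ii). Let `unitInd a` be the indicator of the unitary divisors of `a`; it is multiplicative.
In `Wconv W (unitInd a) (unitInd b) (a * b)` the only nonzero term is the one at `(a, b)`, so the
value is exactly `W (a, b)` (`Wconv_unitInd`). The identity law (`δ₁ = unitInd 1`) gives
`W (a, 1) = 1`, commutativity gives `W (1, b) = 1`, and multiplicativity of
`Wconv W (unitInd a) (unitInd b)` at coprime `a`, `b` gives `W (a, b) = W (a, 1) * W (1, b) = 1`.
If `gcd a b ≠ 1`, distributivity with `H = unitInd (a * b)` gives `W (a, b) = 0`, because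
`H (a * b) = 1` while `H a = 0`. Associativity and inverses play no role here.

(ii) ⇒ (i). For this `W`, `Wconv` is the unitary convolution. It preserves multiplicativity
(`wconv_mult`), and on a prime power `q > 1` it is just `F q + G q` (`wconv_prime_pow`). As
multiplicative functions are determined by their values at prime powers (`IsMult.ext`), the ring
laws reduce to those of addition. The inverse of `F` is the multiplicative function with value
`-F q` at each prime power `q > 1`. Distributivity holds term by term, since only coprime pairs
contribute.
-/

def IsMult (F : ℕ → ℂ) : Prop :=
  F 1 = 1 ∧ ∀ a b : ℕ, 0 < a → 0 < b → Nat.Coprime a b → F (a * b) = F a * F b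

def IsCMult (F : ℕ → ℂ) : Prop :=
  F 1 = 1 ∧ ∀ a b : ℕ, 0 < a → 0 < b → F (a * b) = F a * F b

def delta1 : ℕ → ℂ := fun n => if n = 1 then 1 else 0

noncomputable def Wconv (W : ℕ × ℕ → ℂ) (F G : ℕ → ℂ) : ℕ → ℂ := fun m =>
  ∑ p ∈ m.divisorsAntidiagonal, F p.1 * G p.2 * W p

noncomputable def uconv (F G : ℕ → ℂ) : ℕ → ℂ := fun m =>
  ∑ p ∈ m.divisorsAntidiagonal.filter (fun p => Nat.Coprime p.1 p.2), F p.1 * G p.2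

noncomputable def D (F : ℕ → ℂ) (s : ℂ) : ℂ :=
  ∑' n : ℕ, F (n + 1) * ((n + 1 : ℕ) : ℂ) ^ (-s)

open Finset

/-! ### Multiplicative functions -/

theorem IsMult.ext {F G : ℕ → ℂ} (hF : IsMult F) (hG : IsMult G)
    (h : ∀ p n : ℕ, p.Prime → 0 < n → F (p ^ n) = G (p ^ n)) (m : ℕ) (hm : 0 < m) :
    F m = G m := by
  induction m using Nat.recOnPosPrimePosCoprime with
  | prime_pow p n hp hn => exact h p n hp hn
  | zero => exact absurd hm (lt_irrefl 0)
  | one => rw [hF.1, hG.1]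
  | coprime a b ha hb hab iha ihb =>
    rw [hF.2 a b (by omega) (by omega) hab, hG.2 a b (by omega) (by omega) hab,
      iha (by omega), ihb (by omega)]

theorem delta1_mult : IsMult delta1 := by
  refine ⟨by simp [delta1], fun a b _ _ _ => ?_⟩
  simp only [delta1, mul_eq_one]
  by_cases h : a = 1 <;> by_cases h' : b = 1 <;> simp [h, h']

theorem IsMult.mul {F H : ℕ → ℂ} (hF : IsMult F) (hH : IsMult H) :
    IsMult (fun n => F n * H n) := by
  refine ⟨by simp [hF.1, hH.1], fun a b ha hb hab => ?_⟩
  simp only [hF.2 a b ha hb hab, hH.2 a b ha hb hab]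
  ring

/-! ### Unitary divisors -/

/-- `a` is a unitary divisor of `n`: `n = a * c` for some `c` coprime to `a`. -/
def UnitDvd (a n : ℕ) : Prop := ∃ c, n = a * c ∧ Nat.Coprime a c

theorem unitDvd_mul {a b n : ℕ} (hab : Nat.Coprime a b) :
    UnitDvd (a * b) n ↔ UnitDvd a n ∧ UnitDvd b n := by
  constructor
  · rintro ⟨c, rfl, h⟩
    exact ⟨⟨b * c, by ring, hab.mul_right (Nat.Coprime.coprime_mul_right h)⟩,
      ⟨a * c, by ring, hab.symm.mul_right (Nat.Coprime.coprime_mul_left h)⟩⟩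
  · rintro ⟨⟨c, rfl, hc⟩, ⟨d, hd, hbd⟩⟩
    rcases Nat.eq_zero_or_pos b with rfl | hb
    -- for `b = 0` one has `a * b = b`, so the cofactor of `b` serves
    · exact ⟨d, by simpa using hd, by simpa using hbd⟩
    obtain ⟨e, rfl⟩ : b ∣ c := hab.symm.dvd_of_dvd_mul_left ⟨d, hd⟩
    have hde : d = a * e := Nat.eq_of_mul_eq_mul_left hb (by rw [← hd]; ring)
    subst hde
    exact ⟨e, by ring, (Nat.Coprime.coprime_mul_left_right hc).mul_left
      (Nat.Coprime.coprime_mul_left_right hbd)⟩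

open Classical in
/-- The indicator function of the unitary divisors of `n`. -/
noncomputable def unitInd (n : ℕ) : ℕ → ℂ := fun a => if UnitDvd a n then 1 else 0

theorem unitInd_mult (n : ℕ) : IsMult (unitInd n) := by
  constructor
  · have : UnitDvd 1 n := ⟨n, by simp, by simp⟩
    simp [unitInd, this]
  · intro a b _ _ hab
    by_cases h : UnitDvd a n <;> by_cases h' : UnitDvd b n <;>
      simp [unitInd, unitDvd_mul hab, h, h']

theorem unitInd_self (n : ℕ) : unitInd n n = 1 := by
  have : UnitDvd n n := ⟨1, by simp, by simp⟩
  simp [unitInd, this]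

theorem unitInd_of_not_dvd {n a : ℕ} (h : ¬ a ∣ n) : unitInd n a = 0 := by
  have : ¬ UnitDvd a n := fun ⟨c, hc, _⟩ => h ⟨c, hc⟩
  simp [unitInd, this]

theorem unitInd_one : unitInd 1 = delta1 := by
  funext n
  by_cases h : n = 1
  · subst h; simp [unitInd_self, delta1]
  · rw [unitInd_of_not_dvd (by simpa using h)]; simp [delta1, h]

theorem unitInd_mul_left_eq_zero {a b : ℕ} (ha : 0 < a) (h : ¬ Nat.Coprime a b) :
    unitInd (a * b) a = 0 := by
  have : ¬ UnitDvd a (a * b) := by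
    rintro ⟨c, hc, hac⟩
    exact h (Nat.eq_of_mul_eq_mul_left ha hc ▸ hac)
  simp [unitInd, this]

/-- If `F` and `G` live on the divisors of `a` and of `b`, only the pair `(a, b)` contributes to
the convolution at `a * b`. -/
theorem Wconv_supported (W : ℕ × ℕ → ℂ) {F G : ℕ → ℂ} {a b : ℕ} (ha : 0 < a) (hb : 0 < b)
    (hF : ∀ d, ¬ d ∣ a → F d = 0) (hG : ∀ d, ¬ d ∣ b → G d = 0) :
    Wconv W F G (a * b) = F a * G b * W (a, b) := by
  unfold Wconv
  refine Finset.sum_eq_single_of_mem (a, b) (by simp; omega) ?_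
  rintro ⟨x, y⟩ hxy hne
  obtain ⟨hxy, -⟩ := Nat.mem_divisorsAntidiagonal.1 hxy
  simp only at hxy ⊢
  by_cases hx : x ∣ a
  · by_cases hy : y ∣ b
    · exfalso
      have hxa := Nat.le_of_dvd ha hx
      have hyb := Nat.le_of_dvd hb hy
      apply hne
      have h1 : x = a := by
        by_contra h
        have : x < a := lt_of_le_of_ne hxa h
        nlinarith
      subst h1
      rw [Nat.eq_of_mul_eq_mul_left ha hxy]
    · simp [hG y hy]
  · simp [hF x hx]

theorem Wconv_unitInd (W : ℕ × ℕ → ℂ) {a b : ℕ} (ha : 0 < a) (hb : 0 < b) :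
    Wconv W (unitInd a) (unitInd b) (a * b) = W (a, b) := by
  rw [Wconv_supported W ha hb (fun _ => unitInd_of_not_dvd) (fun _ => unitInd_of_not_dvd),
    unitInd_self, unitInd_self]
  ring

/-- For coprime `a`, `b`, a divisor of both is `1`, so the convolution of `unitInd a` and
`unitInd b` at `a` has only the term at `(a, 1)`. -/
theorem Wconv_unitInd_left (W : ℕ × ℕ → ℂ) {a b : ℕ} (ha : 0 < a) (hab : Nat.Coprime a b) :
    Wconv W (unitInd a) (unitInd b) a = W (a, 1) := by
  unfold Wconv
  rw [Finset.sum_eq_single_of_mem (a, 1) (by simp; omega)]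
  · simp [unitInd_self, (unitInd_mult b).1]
  · rintro ⟨x, y⟩ hxy hne
    obtain ⟨hxy, -⟩ := Nat.mem_divisorsAntidiagonal.1 hxy
    simp only at hxy ⊢
    by_cases hy : y ∣ b
    · obtain rfl : y = 1 := Nat.eq_one_of_dvd_coprimes hab ⟨x, by rw [← hxy]; ring⟩ hy
      simp at hxy
      exact absurd (by rw [hxy]) hne
    · simp [unitInd_of_not_dvd hy]

theorem Wconv_unitInd_right (W : ℕ × ℕ → ℂ) {a b : ℕ} (hb : 0 < b) (hab : Nat.Coprime a b) :
    Wconv W (unitInd a) (unitInd b) b = W (1, b) := by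
  unfold Wconv
  rw [Finset.sum_eq_single_of_mem (1, b) (by simp; omega)]
  · simp [unitInd_self, (unitInd_mult a).1]
  · rintro ⟨x, y⟩ hxy hne
    obtain ⟨hxy, -⟩ := Nat.mem_divisorsAntidiagonal.1 hxy
    simp only at hxy ⊢
    by_cases hx : x ∣ a
    · obtain rfl : x = 1 := Nat.eq_one_of_dvd_coprimes hab hx ⟨y, hxy.symm⟩
      simp at hxy
      exact absurd (by rw [hxy]) hne
    · simp [unitInd_of_not_dvd hx]

/-! ### The unitary convolution -/

/-- `W` is, on positive integers, the indicator of coprime pairs. -/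
def IsUnitary (W : ℕ × ℕ → ℂ) : Prop :=
  ∀ a b : ℕ, 0 < a → 0 < b → (if Nat.gcd a b = 1 then W (a, b) = 1 else W (a, b) = 0)

theorem IsUnitary.eq_ite {W : ℕ × ℕ → ℂ} (hW : IsUnitary W) {a b : ℕ} (ha : 0 < a) (hb : 0 < b) :
    W (a, b) = if Nat.Coprime a b then 1 else 0 := by
  have := hW a b ha hb
  unfold Nat.Coprime
  split_ifs with h
  · simpa [h] using this
  · simpa [h] using this

/-- A factorization `m * n = x * y` with `m`, `n` coprime splits uniquely into factorizations
of `m` and of `n`; the coprimality of `x` and `y` amounts to that of both parts. -/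
theorem wconv_mult {W : ℕ × ℕ → ℂ} (hW : IsUnitary W) {F G : ℕ → ℂ} (hF : IsMult F)
    (hG : IsMult G) : IsMult (Wconv W F G) := by
  constructor
  · have := hW 1 1 one_pos one_pos
    simp at this
    simp [Wconv, hF.1, hG.1, this]
  intro m n hm hn cop
  unfold Wconv
  rw [sum_mul_sum, ← sum_product']
  symm
  apply sum_nbij fun ((i, j), k, l) ↦ (i * k, j * l)
  · rintro ⟨⟨a1, a2⟩, ⟨b1, b2⟩⟩ h
    simp only [Nat.mem_divisorsAntidiagonal, mem_product] at h ⊢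
    rcases h with ⟨⟨rfl, ha⟩, ⟨rfl, hb⟩⟩
    exact ⟨by ring, mul_ne_zero ha hb⟩
  · rintro ⟨⟨a1, a2⟩, ⟨b1, b2⟩⟩ h ⟨⟨c1, c2⟩, ⟨d1, d2⟩⟩ h' heq
    simp only [mem_coe, Nat.mem_divisorsAntidiagonal, mem_product, Prod.mk_inj] at h h' heq
    obtain ⟨⟨ha, -⟩, ⟨hb, -⟩⟩ := h
    obtain ⟨⟨hc, -⟩, ⟨hd, -⟩⟩ := h'
    -- the two parts of a divisor `x * y` of `m * n` are recovered as gcds with `m` and `n`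
    have key : ∀ {x y : ℕ}, x ∣ m → y ∣ n → (x * y).gcd m = x ∧ (x * y).gcd n = y := by
      intro x y hx hy
      have h1 : Nat.Coprime y m := (cop.symm.coprime_dvd_left hy)
      have h2 : Nat.Coprime x n := (cop.coprime_dvd_left hx)
      exact ⟨by rw [h1.gcd_mul_right_cancel, Nat.gcd_eq_left hx],
        by rw [h2.gcd_mul_left_cancel, Nat.gcd_eq_left hy]⟩
    have ka := key (Dvd.intro _ ha) (Dvd.intro _ hb)
    have kc := key (Dvd.intro _ hc) (Dvd.intro _ hd)
    have ka' := key (Dvd.intro_left _ ha) (Dvd.intro_left _ hb)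
    have kc' := key (Dvd.intro_left _ hc) (Dvd.intro_left _ hd)
    rw [← heq.1] at kc
    rw [← heq.2] at kc'
    simp only [Prod.mk_inj]
    exact ⟨⟨ka.1.symm.trans kc.1, ka'.1.symm.trans kc'.1⟩,
      ⟨ka.2.symm.trans kc.2, ka'.2.symm.trans kc'.2⟩⟩
  · rintro ⟨x, y⟩ h
    simp only [mem_coe, Nat.mem_divisorsAntidiagonal] at h
    obtain ⟨hxy, -⟩ := h
    refine ⟨((x.gcd m, y.gcd m), (x.gcd n, y.gcd n)), ?_, ?_⟩
    · simp only [mem_coe, mem_product, Nat.mem_divisorsAntidiagonal]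
      exact ⟨⟨Nat.gcd_mul_gcd_of_coprime_of_mul_eq_mul cop hxy, hm.ne'⟩,
        ⟨Nat.gcd_mul_gcd_of_coprime_of_mul_eq_mul cop.symm (by rw [hxy, mul_comm]), hn.ne'⟩⟩
    · simp only [Prod.mk_inj]
      rw [← cop.gcd_mul, ← cop.gcd_mul, ← hxy]
      simp
  · rintro ⟨⟨i, j⟩, ⟨k, l⟩⟩ h
    simp only [Nat.mem_divisorsAntidiagonal, mem_product] at h
    obtain ⟨⟨rfl, hij⟩, ⟨rfl, hkl⟩⟩ := h
    have hi : 0 < i := Nat.pos_of_ne_zero (left_ne_zero_of_mul hij)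
    have hj : 0 < j := Nat.pos_of_ne_zero (right_ne_zero_of_mul hij)
    have hk : 0 < k := Nat.pos_of_ne_zero (left_ne_zero_of_mul hkl)
    have hl : 0 < l := Nat.pos_of_ne_zero (right_ne_zero_of_mul hkl)
    have hik : Nat.Coprime i k := cop.coprime_mul_right.coprime_mul_right_right
    have hil : Nat.Coprime i l := cop.coprime_mul_right.coprime_mul_left_right
    have hjk : Nat.Coprime j k := cop.coprime_mul_left.coprime_mul_right_right
    have hjl : Nat.Coprime j l := cop.coprime_mul_left.coprime_mul_left_right
    have hiff : Nat.Coprime (i * k) (j * l) ↔ Nat.Coprime i j ∧ Nat.Coprime k l := by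
      rw [Nat.coprime_mul_iff_left, Nat.coprime_mul_iff_right, Nat.coprime_mul_iff_right]
      have := hjk.symm
      tauto
    simp only
    rw [hF.2 i k hi hk hik, hG.2 j l hj hl hjl, hW.eq_ite hi hj, hW.eq_ite hk hl,
      hW.eq_ite (mul_pos hi hk) (mul_pos hj hl)]
    by_cases h1 : Nat.Coprime i j
    · by_cases h2 : Nat.Coprime k l
      · rw [if_pos h1, if_pos h2, if_pos (hiff.2 ⟨h1, h2⟩)]; ring
      · rw [if_neg h2, if_neg (fun h => h2 (hiff.1 h).2)]; ring
    · rw [if_neg h1, if_neg (fun h => h1 (hiff.1 h).1)]; ring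

theorem wconv_prime_pow {W : ℕ × ℕ → ℂ} (hW : IsUnitary W) {F G : ℕ → ℂ} (hF : IsMult F)
    (hG : IsMult G) {p n : ℕ} (hp : p.Prime) (hn : 0 < n) :
    Wconv W F G (p ^ n) = F (p ^ n) + G (p ^ n) := by
  have hq : 0 < p ^ n := pow_pos hp.pos n
  have hq1 : p ^ n ≠ 1 := (Nat.one_lt_pow hn.ne' hp.one_lt).ne'
  have hsub : ({(p ^ n, 1), (1, p ^ n)} : Finset (ℕ × ℕ)) ⊆ (p ^ n).divisorsAntidiagonal := by
    intro x hx
    simp only [mem_insert, mem_singleton] at hx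
    rcases hx with rfl | rfl <;> simp only [Nat.mem_divisorsAntidiagonal] <;>
      exact ⟨by ring, hq.ne'⟩
  unfold Wconv
  rw [← sum_subset hsub, sum_pair (fun h => hq1 (congrArg Prod.fst h))]
  · rw [hW.eq_ite hq one_pos, hW.eq_ite one_pos hq]
    simp [hF.1, hG.1]
  · rintro ⟨x, y⟩ hxy hne
    obtain ⟨hxy, -⟩ := Nat.mem_divisorsAntidiagonal.1 hxy
    simp only at hxy
    obtain ⟨i, -, rfl⟩ := (Nat.dvd_prime_pow hp).1 (Dvd.intro _ hxy)
    obtain ⟨j, -, rfl⟩ := (Nat.dvd_prime_pow hp).1 (Dvd.intro_left _ hxy)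
    have hi : i ≠ 0 := by
      rintro rfl
      simp at hxy hne
      exact hne.2 hxy
    have hj : j ≠ 0 := by
      rintro rfl
      simp at hxy hne
      exact hne.1 hxy
    have hnc : ¬ Nat.Coprime (p ^ i) (p ^ j) := by
      rw [Nat.coprime_pow_left_iff (Nat.pos_of_ne_zero hi),
        Nat.coprime_pow_right_iff (Nat.pos_of_ne_zero hj), Nat.coprime_self]
      exact hp.ne_one
    rw [hW.eq_ite (pow_pos hp.pos _) (pow_pos hp.pos _)]
    simp [hnc]

/-- The inverse of a multiplicative `F` for the unitary convolution: the multiplicative function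
taking the value `-F q` at each prime power `q > 1`. -/
noncomputable def unitInv (F : ℕ → ℂ) : ℕ → ℂ := fun n =>
  n.factorization.prod (fun p k => -F (p ^ k))

theorem unitInv_mult (F : ℕ → ℂ) : IsMult (unitInv F) := by
  refine ⟨by simp [unitInv], fun a b ha hb hab => ?_⟩
  unfold unitInv
  rw [Nat.factorization_mul ha.ne' hb.ne', Finsupp.prod_add_index_of_disjoint]
  simpa using hab.disjoint_primeFactors

theorem unitInv_prime_pow (F : ℕ → ℂ) {p n : ℕ} (hp : p.Prime) (hn : 0 < n) :
    unitInv F (p ^ n) = -F (p ^ n) := by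
  unfold unitInv
  rw [hp.factorization_pow, Finsupp.prod,
    show (Finsupp.single p n).support = {p} by simp [Finsupp.support_single, hn.ne']]
  simp

theorem delta1_prime_pow {p n : ℕ} (hp : p.Prime) (hn : 0 < n) : delta1 (p ^ n) = 0 := by
  have : p ^ n ≠ 1 := (Nat.one_lt_pow hn.ne' hp.one_lt).ne'
  simp only [delta1, if_neg this]

/-! ### The equivalence -/

theorem ring_unicity (W : ℕ × ℕ → ℂ) (hW : W (1, 1) = 1) :
    (∀ F G H : ℕ → ℂ, IsMult F → IsMult G → IsMult H →
      IsMult (Wconv W F G) ∧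
      (∀ m : ℕ, 0 < m → Wconv W F G m = Wconv W G F m) ∧
      (∀ m : ℕ, 0 < m → Wconv W (Wconv W F G) H m = Wconv W F (Wconv W G H) m) ∧
      (∀ m : ℕ, 0 < m → Wconv W F delta1 m = F m) ∧
      (∃ I : ℕ → ℂ, IsMult I ∧ ∀ m : ℕ, 0 < m → Wconv W F I m = delta1 m) ∧
      (∀ m : ℕ, 0 < m →
        Wconv W F G m * H m = Wconv W (fun n => F n * H n) (fun n => G n * H n) m)) ↔
    (∀ a b : ℕ, 0 < a → 0 < b →
      (if Nat.gcd a b = 1 then W (a, b) = 1 else W (a, b) = 0)) := by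
  constructor
  · intro h a b ha hb
    have hW1 : ∀ n : ℕ, 0 < n → W (n, 1) = 1 := by
      intro n hn
      have := (h (unitInd n) _ _ (unitInd_mult n) (unitInd_mult n) (unitInd_mult n)).2.2.2.1 n hn
      have h1 := Wconv_unitInd W hn one_pos
      rwa [unitInd_one, mul_one, this, unitInd_self, eq_comm] at h1
    have h1W : ∀ n : ℕ, 0 < n → W (1, n) = 1 := by
      intro n hn
      have := (h (unitInd 1) _ _ (unitInd_mult 1) (unitInd_mult n) (unitInd_mult n)).2.1 n hn
      have h1 := Wconv_unitInd W hn one_pos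
      have h2 := Wconv_unitInd W one_pos hn
      rw [mul_one] at h1
      rw [one_mul] at h2
      rw [← h2, this, h1, hW1 n hn]
    have hab := h _ _ _ (unitInd_mult a) (unitInd_mult b) (unitInd_mult (a * b))
    split_ifs with hg
    · have h1 := hab.1.2 a b ha hb hg
      rwa [Wconv_unitInd W ha hb, Wconv_unitInd_left W ha hg, Wconv_unitInd_right W hb hg,
        hW1 a ha, h1W b hb, mul_one] at h1
    · have h1 := hab.2.2.2.2.2 (a * b) (mul_pos ha hb)
      rw [Wconv_unitInd W ha hb, unitInd_self, mul_one,
        Wconv_supported W ha hb (fun d hd => by simp [unitInd_of_not_dvd hd])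
          (fun d hd => by simp [unitInd_of_not_dvd hd]),
        unitInd_mul_left_eq_zero ha hg] at h1
      simpa using h1
  · intro hU F G H hF hG hH
    have hU : IsUnitary W := hU
    have hFG := wconv_mult hU hF hG
    have hGF := wconv_mult hU hG hF
    have hGH := wconv_mult hU hG hH
    refine ⟨hFG, ?_, ?_, ?_, ⟨unitInv F, unitInv_mult F, ?_⟩, ?_⟩
    · refine hFG.ext hGF fun p n hp hn => ?_
      rw [wconv_prime_pow hU hF hG hp hn, wconv_prime_pow hU hG hF hp hn, add_comm]
    · refine (wconv_mult hU hFG hH).ext (wconv_mult hU hF hGH) fun p n hp hn => ?_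
      rw [wconv_prime_pow hU hFG hH hp hn, wconv_prime_pow hU hF hG hp hn,
        wconv_prime_pow hU hF hGH hp hn, wconv_prime_pow hU hG hH hp hn, add_assoc]
    · refine (wconv_mult hU hF delta1_mult).ext hF fun p n hp hn => ?_
      rw [wconv_prime_pow hU hF delta1_mult hp hn, delta1_prime_pow hp hn, add_zero]
    · refine (wconv_mult hU hF (unitInv_mult F)).ext delta1_mult fun p n hp hn => ?_
      rw [wconv_prime_pow hU hF (unitInv_mult F) hp hn, unitInv_prime_pow F hp hn,
        delta1_prime_pow hp hn, add_neg_cancel]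
    · intro m hm
      unfold Wconv
      rw [sum_mul]
      refine sum_congr rfl ?_
      rintro ⟨x, y⟩ hxy
      obtain ⟨rfl, -⟩ := Nat.mem_divisorsAntidiagonal.1 hxy
      have hx : 0 < x := Nat.pos_of_mul_pos_right hm
      have hy : 0 < y := Nat.pos_of_mul_pos_left hm
      simp only
      rw [hU.eq_ite hx hy]
      split_ifs with hc
      · rw [hH.2 x y hx hy hc]; ring
      · simp
end

section
/- For every s ∈ ℂ with Re(s) > 1, Σ_{n=1}^∞ Σ_{p prime} (1/n^{s}) · (1/p^{s}) · (1/ω(np)) = ζ(s) − 1, where n ranges over positive integers and p over primes (the double series converges absolutely, and ω(np) ≥ 1 since np ≥ 2). -/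
/-- Pairs `(n, p)` with `p` prime correspond to numbers `m = (n + 1) * p` with a marked prime
factor `p`. Both `0` and `1` have no prime factors, so their fibers are empty. -/
def mulPrimeEquiv : ℕ × Nat.Primes ≃ Σ m : ℕ, {p : ℕ // p ∈ m.primeFactors} where
  toFun x := ⟨(x.1 + 1) * x.2, x.2, Nat.mem_primeFactors.2
    ⟨x.2.2, dvd_mul_left _ _, Nat.mul_ne_zero (Nat.succ_ne_zero _) x.2.2.ne_zero⟩⟩
  invFun y := (y.1 / y.2 - 1, ⟨y.2, Nat.prime_of_mem_primeFactors y.2.2⟩)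
  left_inv := by
    rintro ⟨n, p, hp⟩
    simp [Nat.mul_div_cancel _ hp.pos]
  right_inv := by
    rintro ⟨m, p, hp⟩
    obtain ⟨hpp, ⟨k, rfl⟩, h0⟩ := Nat.mem_primeFactors.1 hp
    have hk : k ≠ 0 := by
      rintro rfl
      simp at h0
    have h : (p * k / p - 1 + 1) * p = p * k := by
      rw [Nat.mul_div_cancel_left _ hpp.pos, Nat.sub_add_cancel (Nat.one_le_iff_ne_zero.2 hk),
        mul_comm]
    refine Sigma.ext h ?_
    exact (Subtype.heq_iff_coe_eq (by simp only [h, implies_true])).2 rfl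

/-- The terms with `n * p = m` add up to `m ^ (-s)`, except that there are none when `m = 1`.
For `m = 0` both sides vanish, using `0 ^ s = 0` for `s ≠ 0`. -/
lemma sum_fiber {s : ℂ} (hs : s ≠ 0) (m : ℕ) :
    ∑' _ : {p : ℕ // p ∈ m.primeFactors}, 1 / (m : ℂ) ^ s * (1 / (m.primeFactors.card : ℂ)) =
      1 / (m : ℂ) ^ s - if m = 1 then 1 else 0 := by
  rw [tsum_fintype, Finset.sum_const, Finset.card_univ, Fintype.card_coe, nsmul_eq_mul]
  rcases Nat.lt_or_ge 1 m with hm | hm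
  · have hc : (m.primeFactors.card : ℂ) ≠ 0 :=
      Nat.cast_ne_zero.2 (Finset.card_ne_zero.2 (Nat.nonempty_primeFactors.2 hm))
    rw [if_neg hm.ne', sub_zero, mul_left_comm, mul_one_div_cancel hc, mul_one]
  · interval_cases m <;> simp [hs]

/-- Absolute convergence of the double series, by comparison with a product of two series. -/
lemma summable_double {s : ℂ} (hs : 1 < s.re) :
    Summable fun x : ℕ × Nat.Primes =>
      (1 / ((x.1 + 1 : ℕ) : ℂ) ^ s) * (1 / ((x.2 : ℕ) : ℂ) ^ s) *
        (1 / ((((x.1 + 1) * (x.2 : ℕ) : ℕ).primeFactors.card : ℕ) : ℂ)) := by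
  have hz : Summable fun n : ℕ => ‖1 / (n : ℂ) ^ s‖ :=
    (Complex.summable_one_div_nat_cpow.2 hs).norm
  have hprod := Summable.mul_of_nonneg ((summable_nat_add_iff 1).2 hz)
    (hz.comp_injective (i := fun p : Nat.Primes => (p : ℕ)) Subtype.val_injective)
    (fun _ => norm_nonneg _) (fun _ => norm_nonneg _)
  refine Summable.of_norm_bounded hprod fun x => ?_
  have h1 (k : ℕ) : ‖1 / (k : ℂ)‖ ≤ 1 := by
    rw [norm_div, norm_one, Complex.norm_natCast, one_div]
    exact Nat.cast_inv_le_one k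
  rw [norm_mul, norm_mul]
  exact mul_le_of_le_one_right (by positivity) (h1 _)

theorem zeta_minus_one (s : ℂ) (hs : 1 < s.re) :
    ∑' (n : ℕ) (p : Nat.Primes),
        (1 / ((n + 1 : ℕ) : ℂ) ^ s) * (1 / ((p : ℕ) : ℂ) ^ s) *
          (1 / ((((n + 1) * (p : ℕ) : ℕ).primeFactors.card : ℕ) : ℂ)) =
      riemannZeta s - 1 := by
  have hs0 : s ≠ 0 := by
    rintro rfl
    norm_num at hs
  have hsum := summable_double hs
  set G : (Σ m : ℕ, {p : ℕ // p ∈ m.primeFactors}) → ℂ :=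
    fun y => 1 / (y.1 : ℂ) ^ s * (1 / (y.1.primeFactors.card : ℂ)) with hG
  have hFG : (fun x : ℕ × Nat.Primes =>
      (1 / ((x.1 + 1 : ℕ) : ℂ) ^ s) * (1 / ((x.2 : ℕ) : ℂ) ^ s) *
        (1 / ((((x.1 + 1) * (x.2 : ℕ) : ℕ).primeFactors.card : ℕ) : ℂ))) =
      G ∘ mulPrimeEquiv := by
    funext x
    simp only [hG, Function.comp_apply, mulPrimeEquiv, Equiv.coe_fn_mk]
    rw [Nat.cast_mul, Complex.natCast_mul_natCast_cpow, one_div_mul_one_div]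
  have hGsum : Summable G := by
    rw [hFG] at hsum
    exact mulPrimeEquiv.summable_iff.1 hsum
  rw [← hsum.tsum_prod, hFG]
  calc ∑' x, (G ∘ mulPrimeEquiv) x
      = ∑' y, G y := mulPrimeEquiv.tsum_eq G
    _ = ∑' m : ℕ, (1 / (m : ℂ) ^ s - if m = 1 then 1 else 0) := by
        rw [hGsum.tsum_sigma]
        exact tsum_congr fun m => sum_fiber hs0 m
    _ = riemannZeta s - 1 := by
        rw [(Complex.summable_one_div_nat_cpow.2 hs).tsum_sub
          (hasSum_ite_eq 1 (1 : ℂ)).summable, tsum_ite_eq, ← zeta_eq_tsum_one_div_nat_cpow hs]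
end

section
/- Let ∇ be any map sending multiplicative functions ℕ → ℂ to multiplicative functions ℕ → ℂ such that for all multiplicative F, G : ℕ → ℂ: ∇(F □ G) = ∇(F) □ ∇(G) on all positive integers, and ∇(F·G) = (∇(F)·G) □ (F·∇(G)) on all positive integers, where · denotes the pointwise product and □ the unitary convolution. Then for every Dirichlet character χ modulo k (k ≥ 1), viewed as a multiplicative function ℕ → ℂ, one has ∇(χ) = δ₁ on all positive integers, i.e., ∇(χ) is the additive identity of the ring of multiplicative functions under □ and ·. -/
def IsDirichletChar (k : ℕ) (χ : ℕ → ℂ) : Prop :=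
  χ 1 = 1 ∧ (∀ a b : ℕ, 0 < a → 0 < b → χ (a * b) = χ a * χ b) ∧
    (∀ m : ℕ, χ (m + k) = χ m) ∧ (∀ m : ℕ, 0 < m → 1 < Nat.gcd m k → χ m = 0)

lemma uconv_prime_pow {F G : ℕ → ℂ} (hF : F 1 = 1) (hG : G 1 = 1) {p j : ℕ} (hp : p.Prime)
    (hj : 0 < j) : uconv F G (p ^ j) = F (p ^ j) + G (p ^ j) := by
  have hq : 1 < p ^ j := Nat.one_lt_pow hj.ne' hp.one_lt
  have hset : (p ^ j).divisorsAntidiagonal.filter (fun x => Nat.Coprime x.1 x.2)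
      = {(p ^ j, 1), (1, p ^ j)} := by
    ext ⟨a, b⟩
    simp only [Finset.mem_filter, Nat.mem_divisorsAntidiagonal, Finset.mem_insert,
      Finset.mem_singleton, Prod.mk.injEq]
    constructor
    · rintro ⟨⟨hab, -⟩, hc⟩
      obtain ⟨u, -, rfl⟩ := (Nat.dvd_prime_pow hp).1 (Dvd.intro b hab)
      obtain ⟨v, -, rfl⟩ := (Nat.dvd_prime_pow hp).1 (Dvd.intro_left _ hab)
      rcases Nat.eq_zero_or_pos u with rfl | hu
      · right
        simpa using hab
      rcases Nat.eq_zero_or_pos v with rfl | hv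
      · left
        simpa using hab
      · exact absurd (Nat.eq_one_of_dvd_coprimes hc (dvd_pow_self p hu.ne')
          (dvd_pow_self p hv.ne')) hp.one_lt.ne'
    · rintro (⟨rfl, rfl⟩ | ⟨rfl, rfl⟩) <;> simp [hp.ne_zero]
  have hne : ((p ^ j, 1) : ℕ × ℕ) ≠ (1, p ^ j) := fun h => hq.ne' (Prod.mk.inj h).1
  rw [uconv, hset, Finset.sum_pair hne]
  simp [hF, hG]

lemma IsMult.pow {F : ℕ → ℂ} (hF : IsMult F) (n : ℕ) : IsMult (fun m => F m ^ n) :=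
  ⟨by simp [hF.1], fun a b ha hb hab => by simp only [hF.2 a b ha hb hab, mul_pow]⟩

lemma Del_pow {Del : (ℕ → ℂ) → (ℕ → ℂ)}
    (hmul : ∀ F : ℕ → ℂ, IsMult F → IsMult (Del F))
    (hleibniz : ∀ F G : ℕ → ℂ, IsMult F → IsMult G →
      ∀ m : ℕ, 0 < m →
        Del (fun n => F n * G n) m = uconv (fun n => Del F n * G n) (fun n => F n * Del G n) m)
    {F : ℕ → ℂ} (hF : IsMult F) {p j : ℕ} (hp : p.Prime) (hj : 0 < j) (n : ℕ) :
    Del (fun m => F m ^ (n + 1)) (p ^ j) = (n + 1) * F (p ^ j) ^ n * Del F (p ^ j) := by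
  induction n with
  | zero => simp
  | succ n ih =>
    have hFn := hF.pow (n + 1)
    have h := hleibniz _ F hFn hF (p ^ j) (pow_pos hp.pos j)
    rw [uconv_prime_pow (by simp [(hmul _ hFn).1, hF.1]) (by simp [(hmul _ hF).1, hF.1]) hp hj,
      ih] at h
    simp only [pow_succ _ (n + 1)]
    rw [h]
    push_cast
    ring

lemma IsDirichletChar.eq_zero_or_pow_totient {k : ℕ} (hk : 1 ≤ k) {χ : ℕ → ℂ}
    (hχ : IsDirichletChar k χ) (m : ℕ) : χ m = 0 ∨ χ m ^ k.totient = 1 := by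
  obtain ⟨h1, hmul, hper, hz⟩ := hχ
  -- Complete multiplicativity is only assumed at positive arguments, so `0` is first moved to `k`.
  wlog hm : 0 < m generalizing m
  · have h := this (m + k) (by omega)
    rwa [hper] at h
  rcases Nat.lt_or_ge 1 (Nat.gcd m k) with hg | hg
  · exact Or.inl (hz m hm hg)
  right
  have hc : Nat.Coprime m k := le_antisymm hg (Nat.gcd_pos_of_pos_left k hm)
  have hpow : ∀ n : ℕ, χ m ^ n = χ (m ^ n) := by
    intro n
    induction n with
    | zero => simp [h1]
    | succ n ih => rw [pow_succ, pow_succ, hmul _ _ (pow_pos hm n) hm, ih]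
  have hp : Function.Periodic χ k := hper
  rw [hpow, ← hp.map_mod_nat, Nat.ModEq.pow_totient hc, hp.map_mod_nat, h1]

theorem character_derivation (Del : (ℕ → ℂ) → (ℕ → ℂ))
    (hmul : ∀ F : ℕ → ℂ, IsMult F → IsMult (Del F))
    (hadd : ∀ F G : ℕ → ℂ, IsMult F → IsMult G →
      ∀ m : ℕ, 0 < m → Del (uconv F G) m = uconv (Del F) (Del G) m)
    (hleibniz : ∀ F G : ℕ → ℂ, IsMult F → IsMult G →
      ∀ m : ℕ, 0 < m →
        Del (fun n => F n * G n) m = uconv (fun n => Del F n * G n) (fun n => F n * Del G n) m)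
    (k : ℕ) (hk : 1 ≤ k) (χ : ℕ → ℂ) (hχ : IsDirichletChar k χ) :
    ∀ m : ℕ, 0 < m → Del χ m = delta1 m := by
  have hM : IsMult χ := ⟨hχ.1, fun a b ha hb _ => hχ.2.1 a b ha hb⟩
  have hval := hχ.eq_zero_or_pow_totient hk
  have hn : 0 < k.totient := Nat.totient_pos.2 hk
  -- This holds at `0` too, so `Del` can be applied to both sides.
  have hχn : (fun m => χ m ^ (k.totient + 1)) = χ := by
    funext m
    rcases hval m with h | h
    · simp [h]
    · simp [pow_succ, h]
  have hpp : ∀ p j : ℕ, p.Prime → 0 < j → Del χ (p ^ j) = 0 := by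
    intro p j hp hj
    have h := Del_pow hmul hleibniz hM hp hj k.totient
    rw [hχn] at h
    rcases hval (p ^ j) with h0 | h0
    · simpa [h0, hn.ne'] using h
    · rw [h0] at h
      have h' : (k.totient : ℂ) * Del χ (p ^ j) = 0 := by linear_combination -h
      exact (mul_eq_zero.1 h').resolve_left (Nat.cast_ne_zero.2 hn.ne')
  have hD := hmul χ hM
  intro m hm
  by_cases hm1 : m = 1
  · simp [hm1, delta1, hD.1]
  -- Split off the full power of the smallest prime factor of `m`.
  have hp := Nat.minFac_prime hm1
  obtain ⟨j, c, hc, hmc⟩ := Nat.exists_eq_pow_mul_and_not_dvd hm.ne' m.minFac hp.ne_one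
  have hj : 0 < j := by
    rcases Nat.eq_zero_or_pos j with rfl | hj
    · rw [pow_zero, one_mul] at hmc
      exact absurd (hmc ▸ m.minFac_dvd) hc
    · exact hj
  have hc0 : 0 < c := Nat.pos_of_ne_zero fun h => hc (h ▸ dvd_zero _)
  have hcop : Nat.Coprime (m.minFac ^ j) c := ((Nat.Prime.coprime_iff_not_dvd hp).2 hc).pow_left j
  have h := hD.2 _ _ (pow_pos hp.pos j) hc0 hcop
  rw [← hmc, hpp _ _ hp hj, zero_mul] at h
  simp [h, delta1, hm1]
end

section
/- Let W : ℕ × ℕ → ℂ. Then the W-convolution is commutative on multiplicative functions if and only if W is symmetric; that is: (for all multiplicative F, G : ℕ → ℂ and all positive integers m, (F □_W G)(m) = (G □_W F)(m)) if and only if (for all positive integers a, b, W(a,b) = W(b,a)). -/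
/-- The indicator function of the set of divisors of `a`. -/
def divInd (a : ℕ) : ℕ → ℂ := fun n => if n ∣ a then 1 else 0

lemma isMult_divInd (a : ℕ) : IsMult (divInd a) := by
  refine ⟨by simp [divInd], fun x y _ _ hxy => ?_⟩
  have h : x * y ∣ a ↔ x ∣ a ∧ y ∣ a :=
    ⟨fun h => ⟨(dvd_mul_right x y).trans h, (dvd_mul_left y x).trans h⟩,
      fun h => hxy.mul_dvd_of_dvd_of_dvd h.1 h.2⟩
  by_cases hx : x ∣ a <;> by_cases hy : y ∣ a <;> simp [divInd, h, hx, hy]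

lemma Wconv_divInd (W : ℕ × ℕ → ℂ) {a b : ℕ} (ha : 0 < a) (hb : 0 < b) :
    Wconv W (divInd a) (divInd b) (a * b) = W (a, b) := by
  unfold Wconv
  rw [Finset.sum_eq_single (a, b)]
  · simp [divInd]
  · rintro ⟨c, d⟩ hcd hne
    have hmul : c * d = a * b := (Nat.mem_divisorsAntidiagonal.1 hcd).1
    by_cases hc : c ∣ a
    · by_cases hd : d ∣ b
      · have hca := Nat.le_of_dvd ha hc
        have hdb := Nat.le_of_dvd hb hd
        have h1 : c = a := by
          by_contra hlt
          have : c < a := lt_of_le_of_ne hca hlt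
          nlinarith
        subst h1
        exact absurd (by rw [Nat.eq_of_mul_eq_mul_left ha hmul]) hne
      · simp [divInd, hd]
    · simp [divInd, hc]
  · intro h
    exact absurd (Nat.mem_divisorsAntidiagonal.2 ⟨rfl, (Nat.mul_pos ha hb).ne'⟩) h

theorem commutativity_lemma (W : ℕ × ℕ → ℂ) :
    (∀ F G : ℕ → ℂ, IsMult F → IsMult G → ∀ m : ℕ, 0 < m → Wconv W F G m = Wconv W G F m) ↔
    (∀ a b : ℕ, 0 < a → 0 < b → W (a, b) = W (b, a)) := by
  constructor
  · intro h a b ha hb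
    have key := h _ _ (isMult_divInd a) (isMult_divInd b) (a * b) (Nat.mul_pos ha hb)
    rwa [Wconv_divInd W ha hb, mul_comm a b, Wconv_divInd W hb ha] at key
  · intro h F G _ _ m _
    unfold Wconv
    refine Finset.sum_nbij' Prod.swap Prod.swap ?_ ?_ ?_ ?_ ?_
    · rintro ⟨c, d⟩ hp
      exact Nat.swap_mem_divisorsAntidiagonal.2 hp
    · rintro ⟨c, d⟩ hp
      exact Nat.swap_mem_divisorsAntidiagonal.2 hp
    · simp
    · simp
    · rintro ⟨c, d⟩ hp
      have hcd := Nat.mem_divisorsAntidiagonal.1 hp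
      have hc : 0 < c := Nat.pos_of_ne_zero fun h0 => hcd.2 (by simp [← hcd.1, h0])
      have hd : 0 < d := Nat.pos_of_ne_zero fun h0 => hcd.2 (by simp [← hcd.1, h0])
      simp only [Prod.swap, h c d hc hd, mul_comm (F c)]
end

section
/- Let W : ℕ × ℕ → ℂ with W(1,1) = 1. Then the W-convolution of any two multiplicative functions is multiplicative if and only if W is multiplicative in pairs; that is: (for all multiplicative F, G : ℕ → ℂ, F □_W G is multiplicative) if and only if (for all positive integers a, b, c, d with gcd(ab, cd) = 1, W(a,b)·W(c,d) = W(ac, bd)). -/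
/-- `x` is a unitary divisor of `n`: a divisor coprime to its codivisor. -/
def IsUnitaryDvd (x n : ℕ) : Prop := ∃ k, n = x * k ∧ Nat.Coprime x k

lemma isUnitaryDvd_mul_iff {n x y : ℕ} (hy : 0 < y) (hxy : Nat.Coprime x y) :
    IsUnitaryDvd (x * y) n ↔ IsUnitaryDvd x n ∧ IsUnitaryDvd y n := by
  constructor
  · rintro ⟨k, rfl, hk⟩
    rw [Nat.coprime_mul_iff_left] at hk
    exact ⟨⟨y * k, by ring, hxy.mul_right hk.1⟩, ⟨x * k, by ring, hxy.symm.mul_right hk.2⟩⟩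
  · rintro ⟨⟨k, rfl, hk⟩, ⟨l, hl, hyl⟩⟩
    obtain ⟨t, rfl⟩ : y ∣ k := hxy.symm.dvd_of_dvd_mul_left ⟨l, hl⟩
    have h : y * l = y * (x * t) := by rw [← hl]; ring
    refine ⟨t, by ring, Nat.Coprime.mul_left hk.coprime_mul_left_right ?_⟩
    rw [Nat.eq_of_mul_eq_mul_left hy h] at hyl
    exact hyl.coprime_mul_left_right

open Classical in
/-- The indicator function of the unitary divisors of `n`. -/
noncomputable def unitaryIndicator (n x : ℕ) : ℂ := if IsUnitaryDvd x n then 1 else 0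

lemma isMult_unitaryIndicator (n : ℕ) : IsMult (unitaryIndicator n) := by
  refine ⟨if_pos ⟨n, by simp, by simp⟩, fun x y _ hy hxy => ?_⟩
  have h := isUnitaryDvd_mul_iff (n := n) hy hxy
  by_cases h1 : IsUnitaryDvd x n <;> by_cases h2 : IsUnitaryDvd y n <;>
    simp [unitaryIndicator, h, h1, h2]

lemma unitaryIndicator_of_not_dvd {n x : ℕ} (h : ¬ x ∣ n) : unitaryIndicator n x = 0 :=
  if_neg fun ⟨k, hk, _⟩ => h ⟨k, hk⟩

lemma unitaryIndicator_mul_self {a c : ℕ} (h : Nat.Coprime a c) :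
    unitaryIndicator (a * c) a = 1 :=
  if_pos ⟨c, rfl, h⟩

/-- A convolution of unitary indicators collapses to the term at `(a, b)` once any divisors of `M`
and `N` with product `a * b` divide `a` and `b` respectively. -/
lemma Wconv_unitaryIndicator (W : ℕ × ℕ → ℂ) {M N a b : ℕ} (ha : 0 < a) (hb : 0 < b)
    (hM : unitaryIndicator M a = 1) (hN : unitaryIndicator N b = 1)
    (h : ∀ u v, u ∣ M → v ∣ N → u * v = a * b → u ∣ a ∧ v ∣ b) :
    Wconv W (unitaryIndicator M) (unitaryIndicator N) (a * b) = W (a, b) := by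
  unfold Wconv
  rw [Finset.sum_eq_single (a, b)]
  · simp [hM, hN]
  · rintro ⟨u, v⟩ huv hne
    have e : u * v = a * b := (Nat.mem_divisorsAntidiagonal.mp huv).1
    by_cases hu : u ∣ M
    · by_cases hv : v ∣ N
      · obtain ⟨h1, h2⟩ := h u v hu hv e
        have h3 := Nat.le_of_dvd ha h1
        have h4 := Nat.le_of_dvd hb h2
        exfalso
        apply hne
        have h5 : u = a := by
          by_contra hua
          have : u * v ≤ u * b := Nat.mul_le_mul_left _ h4
          have : u * b < a * b := Nat.mul_lt_mul_of_pos_right (by omega) hb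
          omega
        subst h5
        rw [Nat.eq_of_mul_eq_mul_left ha e]
      · simp [unitaryIndicator_of_not_dvd hv]
    · simp [unitaryIndicator_of_not_dvd hu]
  · intro hn
    exact absurd (Nat.mem_divisorsAntidiagonal.mpr ⟨rfl, by positivity⟩) hn

/-- If `a, b` are coprime to `c, d`, divisors of `a * c` and `b * d` with product `a * b` divide
`a` and `b`. -/
lemma dvd_of_coprime_mul {a b c d u v : ℕ} (h : Nat.Coprime (a * b) (c * d)) (hu : u ∣ a * c)
    (hv : v ∣ b * d) (e : u * v = a * b) : u ∣ a ∧ v ∣ b := by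
  rw [← e] at h
  exact ⟨(h.coprime_mul_right.coprime_mul_right_right).dvd_of_dvd_mul_right hu,
    (h.coprime_mul_left.coprime_mul_left_right).dvd_of_dvd_mul_right hv⟩

lemma Wconv_unitaryIndicator_left (W : ℕ × ℕ → ℂ) {a b c d : ℕ} (ha : 0 < a) (hb : 0 < b)
    (h : Nat.Coprime (a * b) (c * d)) :
    Wconv W (unitaryIndicator (a * c)) (unitaryIndicator (b * d)) (a * b) = W (a, b) :=
  Wconv_unitaryIndicator W ha hb
    (unitaryIndicator_mul_self h.coprime_mul_right.coprime_mul_right_right)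
    (unitaryIndicator_mul_self h.coprime_mul_left.coprime_mul_left_right)
    fun _ _ hu hv e => dvd_of_coprime_mul h hu hv e

/-- Factorizations of `m * n`, with `m` and `n` coprime, are the componentwise products of a
factorization of `m` and one of `n`, each arising once. -/
lemma sum_divisorsAntidiagonal_mul {m n : ℕ} (cop : Nat.Coprime m n) (f : ℕ × ℕ → ℂ) :
    ∑ p ∈ (m * n).divisorsAntidiagonal, f p =
      ∑ p ∈ m.divisorsAntidiagonal, ∑ q ∈ n.divisorsAntidiagonal,
        f (p.1 * q.1, p.2 * q.2) := by
  rw [← Finset.sum_product']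
  -- Inverse to the componentwise product: take gcds with `m` and with `n`.
  have key : ∀ {x y m n : ℕ}, Nat.Coprime m n → x ∣ m → y ∣ n → Nat.gcd (x * y) m = x := by
    intro x y m n h hx hy
    rw [Nat.Coprime.gcd_mul_right_cancel x (Nat.Coprime.coprime_dvd_left hy h.symm)]
    exact Nat.gcd_eq_left hx
  have key' : ∀ {x y m n : ℕ}, Nat.Coprime m n → x ∣ m → y ∣ n → Nat.gcd (x * y) n = y := by
    intro x y m n h hx hy
    rw [mul_comm]
    exact key h.symm hy hx
  have split : ∀ {x : ℕ}, x ∣ m * n → Nat.gcd x m * Nat.gcd x n = x := fun hx => by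
    rw [← Nat.Coprime.gcd_mul _ cop]
    exact Nat.gcd_eq_left hx
  refine Finset.sum_nbij' (fun p => ((p.1.gcd m, p.2.gcd m), (p.1.gcd n, p.2.gcd n)))
    (fun r => (r.1.1 * r.2.1, r.1.2 * r.2.2)) ?_ ?_ ?_ ?_ ?_
  · rintro ⟨u, v⟩ h
    obtain ⟨e, h0⟩ := Nat.mem_divisorsAntidiagonal.mp h
    simp only at e
    have hu := split ⟨v, e.symm⟩
    have hv := split ⟨u, by rw [← e, mul_comm]⟩
    have E : (u.gcd m * v.gcd m) * (u.gcd n * v.gcd n) = m * n := by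
      rw [mul_mul_mul_comm, hu, hv, e]
    have c1 : Nat.Coprime (u.gcd m * v.gcd m) n :=
      (Nat.Coprime.coprime_dvd_left (Nat.gcd_dvd_right _ _) cop).mul_left
        (Nat.Coprime.coprime_dvd_left (Nat.gcd_dvd_right _ _) cop)
    have c2 : Nat.Coprime (u.gcd n * v.gcd n) m :=
      (Nat.Coprime.coprime_dvd_left (Nat.gcd_dvd_right _ _) cop.symm).mul_left
        (Nat.Coprime.coprime_dvd_left (Nat.gcd_dvd_right _ _) cop.symm)
    simp only [Finset.mem_product, Nat.mem_divisorsAntidiagonal]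
    refine ⟨⟨Nat.dvd_antisymm (c1.dvd_of_dvd_mul_right ⟨_, E.symm⟩)
      (c2.symm.dvd_of_dvd_mul_right ⟨_, E⟩), left_ne_zero_of_mul h0⟩,
      ⟨Nat.dvd_antisymm (c2.dvd_of_dvd_mul_left (Dvd.intro_left _ E))
      (c1.symm.dvd_of_dvd_mul_left (Dvd.intro_left _ E.symm)), right_ne_zero_of_mul h0⟩⟩
  · rintro ⟨⟨a, b⟩, ⟨c, d⟩⟩ h
    simp only [Finset.mem_product, Nat.mem_divisorsAntidiagonal] at h ⊢
    obtain ⟨⟨rfl, h1⟩, ⟨rfl, h2⟩⟩ := h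
    exact ⟨by ring, mul_ne_zero h1 h2⟩
  · rintro ⟨u, v⟩ h
    obtain ⟨e, h0⟩ := Nat.mem_divisorsAntidiagonal.mp h
    simp only at e
    simp only [split ⟨v, e.symm⟩, split ⟨u, by rw [← e, mul_comm]⟩]
  · rintro ⟨⟨a, b⟩, ⟨c, d⟩⟩ h
    simp only [Finset.mem_product, Nat.mem_divisorsAntidiagonal] at h
    have ha : a ∣ m := ⟨b, h.1.1.symm⟩
    have hb : b ∣ m := Dvd.intro_left _ h.1.1
    have hc : c ∣ n := ⟨d, h.2.1.symm⟩
    have hd : d ∣ n := Dvd.intro_left _ h.2.1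
    simp only [key cop ha hc, key cop hb hd, key' cop ha hc, key' cop hb hd]
  · rintro ⟨u, v⟩ h
    obtain ⟨e, h0⟩ := Nat.mem_divisorsAntidiagonal.mp h
    simp only at e
    simp only [split ⟨v, e.symm⟩, split ⟨u, by rw [← e, mul_comm]⟩]

theorem stability_lemma (W : ℕ × ℕ → ℂ) (hW : W (1, 1) = 1) :
    (∀ F G : ℕ → ℂ, IsMult F → IsMult G → IsMult (Wconv W F G)) ↔
    (∀ a b c d : ℕ, 0 < a → 0 < b → 0 < c → 0 < d → Nat.Coprime (a * b) (c * d) →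
      W (a, b) * W (c, d) = W (a * c, b * d)) := by
  constructor
  · intro H a b c d ha hb hc hd h
    have hm := (H _ _ (isMult_unitaryIndicator (a * c)) (isMult_unitaryIndicator (b * d))).2
      (a * b) (c * d) (Nat.mul_pos ha hb) (Nat.mul_pos hc hd) h
    have h1 := Wconv_unitaryIndicator_left W ha hb h
    have h2 := Wconv_unitaryIndicator_left W hc hd h.symm
    have h3 := Wconv_unitaryIndicator_left W (c := 1) (d := 1) (Nat.mul_pos ha hc)
      (Nat.mul_pos hb hd) (by simp)
    rw [mul_comm c a, mul_comm d b] at h2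
    rw [mul_one, mul_one] at h3
    rw [← h1, ← h2, ← h3, ← hm, mul_mul_mul_comm]
  · intro H F G hF hG
    refine ⟨by simp [Wconv, hF.1, hG.1, hW], fun m n hm hn cop => ?_⟩
    unfold Wconv
    rw [sum_divisorsAntidiagonal_mul cop, Finset.sum_mul_sum]
    refine Finset.sum_congr rfl fun p hp => Finset.sum_congr rfl fun q hq => ?_
    obtain ⟨a, b⟩ := p
    obtain ⟨c, d⟩ := q
    obtain ⟨rfl, -⟩ := Nat.mem_divisorsAntidiagonal.mp hp
    obtain ⟨rfl, -⟩ := Nat.mem_divisorsAntidiagonal.mp hq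
    simp only at hm hn cop ⊢
    have ha := Nat.pos_of_mul_pos_right hm
    have hb := Nat.pos_of_mul_pos_left hm
    have hc := Nat.pos_of_mul_pos_right hn
    have hd := Nat.pos_of_mul_pos_left hn
    rw [hF.2 a c ha hc cop.coprime_mul_right.coprime_mul_right_right,
      hG.2 b d hb hd cop.coprime_mul_left.coprime_mul_left_right,
      ← H a b c d ha hb hc hd cop]
    ring
end

section
/- Let W : ℕ × ℕ → ℂ be symmetric (W(a,b) = W(b,a) for all positive integers a, b), satisfy W(1,1) = 1, and be multiplicative in pairs (W(a,b)·W(c,d) = W(ac,bd) whenever gcd(ab, cd) = 1). Then the W-convolution is associative on multiplicative functions if and only if W satisfies the cocycle relation; that is: (for all multiplicative F, G, H : ℕ → ℂ and all positive integers m, ((F □_W G) □_W H)(m) = (F □_W (G □_W H))(m)) if and only if (for all positive integers a, b, c, W(a,b)·W(ab,c) = W(b,c)·W(bc,a)). -/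
lemma divInd_support (a x : ℕ) (hx : ¬ x ∣ a) : divInd a x = 0 := if_neg hx

lemma divInd_self (a : ℕ) : divInd a a = 1 := if_pos dvd_rfl

lemma eq_of_dvd_of_mul_eq {a b x y : ℕ} (ha : 0 < a) (hb : 0 < b) (hx : x ∣ a) (hy : y ∣ b)
    (h : x * y = a * b) : x = a ∧ y = b := by
  have hxa := Nat.le_of_dvd ha hx
  have hyb := Nat.le_of_dvd hb hy
  constructor <;> nlinarith

lemma Wconv_support (W : ℕ × ℕ → ℂ) {F G : ℕ → ℂ} {a b : ℕ}
    (hF : ∀ x, ¬ x ∣ a → F x = 0) (hG : ∀ x, ¬ x ∣ b → G x = 0) (x : ℕ) (hx : ¬ x ∣ a * b) :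
    Wconv W F G x = 0 := by
  refine Finset.sum_eq_zero fun p hp => ?_
  rw [Nat.mem_divisorsAntidiagonal] at hp
  by_cases h1 : p.1 ∣ a
  · by_cases h2 : p.2 ∣ b
    · exact absurd (hp.1 ▸ mul_dvd_mul h1 h2) hx
    · simp [hG _ h2]
  · simp [hF _ h1]

/-- If `F` and `G` are supported on the divisors of `a` and `b`, the convolution at the top value
`a * b` reduces to the single term `(a, b)`. -/
lemma Wconv_top (W : ℕ × ℕ → ℂ) {F G : ℕ → ℂ} {a b : ℕ} (ha : 0 < a) (hb : 0 < b)
    (hF : ∀ x, ¬ x ∣ a → F x = 0) (hG : ∀ x, ¬ x ∣ b → G x = 0) :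
    Wconv W F G (a * b) = F a * G b * W (a, b) := by
  refine Finset.sum_eq_single (a, b) (fun p hp hne => ?_) (fun h => ?_)
  · rw [Nat.mem_divisorsAntidiagonal] at hp
    by_cases h1 : p.1 ∣ a
    · by_cases h2 : p.2 ∣ b
      · obtain ⟨e1, e2⟩ := eq_of_dvd_of_mul_eq ha hb h1 h2 hp.1
        exact absurd (Prod.ext e1 e2) hne
      · simp [hG _ h2]
    · simp [hF _ h1]
  · exact absurd (Nat.mem_divisorsAntidiagonal.2 ⟨rfl, (Nat.mul_pos ha hb).ne'⟩) h

/-- The cocycle relation makes the convolution associative on all functions, multiplicative or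
not. -/
lemma Wconv_assoc (W : ℕ × ℕ → ℂ) (hsymm : ∀ a b : ℕ, 0 < a → 0 < b → W (a, b) = W (b, a))
    (hW : ∀ a b c : ℕ, 0 < a → 0 < b → 0 < c →
      W (a, b) * W (a * b, c) = W (b, c) * W (b * c, a))
    (F G H : ℕ → ℂ) (m : ℕ) :
    Wconv W (Wconv W F G) H m = Wconv W F (Wconv W G H) m := by
  simp only [Wconv, Finset.sum_mul, Finset.mul_sum, Finset.sum_sigma']
  apply Finset.sum_nbij' (fun ⟨⟨_i, j⟩, ⟨k, l⟩⟩ ↦ ⟨(k, l * j), (l, j)⟩)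
    (fun ⟨⟨i, _j⟩, ⟨k, l⟩⟩ ↦ ⟨(i * k, l), (i, k)⟩)
  case h =>
    rintro ⟨⟨d, c⟩, ⟨a, b⟩⟩ h
    simp only [Finset.mem_sigma, Nat.mem_divisorsAntidiagonal] at h
    obtain ⟨⟨rfl, hm⟩, rfl, hd⟩ := h
    have hc : 0 < c := Nat.pos_of_ne_zero (right_ne_zero_of_mul hm)
    have ha : 0 < a := Nat.pos_of_ne_zero (left_ne_zero_of_mul hd)
    have hb : 0 < b := Nat.pos_of_ne_zero (right_ne_zero_of_mul hd)
    have key := hW a b c ha hb hc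
    rw [hsymm (b * c) a (Nat.mul_pos hb hc) ha] at key
    linear_combination F a * G b * H c * key
  all_goals
    simp only [Finset.mem_sigma, Nat.mem_divisorsAntidiagonal]
    grind

theorem associativity_lemma (W : ℕ × ℕ → ℂ)
    (hsymm : ∀ a b : ℕ, 0 < a → 0 < b → W (a, b) = W (b, a))
    (h11 : W (1, 1) = 1)
    (hmul : ∀ a b c d : ℕ, 0 < a → 0 < b → 0 < c → 0 < d → Nat.Coprime (a * b) (c * d) →
      W (a, b) * W (c, d) = W (a * c, b * d)) :
    (∀ F G H : ℕ → ℂ, IsMult F → IsMult G → IsMult H →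
      ∀ m : ℕ, 0 < m → Wconv W (Wconv W F G) H m = Wconv W F (Wconv W G H) m) ↔
    (∀ a b c : ℕ, 0 < a → 0 < b → 0 < c →
      W (a, b) * W (a * b, c) = W (b, c) * W (b * c, a)) := by
  
  refine ⟨fun hassoc a b c ha hb hc => ?_, fun hW F G H _ _ _ m _ => Wconv_assoc W hsymm hW F G H m⟩
  have h := hassoc _ _ _ (isMult_divInd a) (isMult_divInd b) (isMult_divInd c) (a * b * c)
    (Nat.mul_pos (Nat.mul_pos ha hb) hc)
  have sa := divInd_support a
  have sb := divInd_support b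
  have sc := divInd_support c
  rw [Wconv_top W (Nat.mul_pos ha hb) hc (Wconv_support W sa sb) sc, Wconv_top W ha hb sa sb,
    mul_assoc a b c, Wconv_top W ha (Nat.mul_pos hb hc) sa (Wconv_support W sb sc),
    Wconv_top W hb hc sb sc] at h
  simpa [divInd_self, hsymm (b * c) a (Nat.mul_pos hb hc) ha] using h
end
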